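/- arXiv:1712.02454 — 3 statements merged into one kernel-verified Lean document; each statement's English description precedes it below -/
import Mathlib

section
/- Let h_1, ..., h_10 be the ten generating hives of H(3) (listed in the context), and let φ : C[x_1, ..., x_10] → C[z_{ij} : 1 ≤ j ≤ i ≤ 4] be the C-algebra homomorphism sending x_k to the monomial z^{h_k} = Π_{i,j} z_{ij}^{(h_k)_{ij}}. Then the kernel of φ is the ideal generated by the single binomial x_1 x_6 x_7 − x_5 x_10. In particular the hive algebra HA(3), defined as the image of φ, is isomorphic to C[x_1, ..., x_10] / ⟨x_1 x_6 x_7 − x_5 x_10⟩. -/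
open MvPolynomial

/-- The ten generating hives of the hive monoid `H(3)`, written as tuples
`(h₁₁, h₂₁, h₂₂, h₃₁, h₃₂, h₃₃, h₄₁, h₄₂, h₄₃, h₄₄)` of natural numbers. -/
def hive3Gens : Fin 10 → Fin 10 → ℕ :=
  ![![0,0,1,0,1,1,0,1,1,1],
    ![0,0,1,0,1,2,0,1,2,3],
    ![0,0,1,0,1,2,0,1,2,2],
    ![0,1,1,1,1,1,1,1,1,1],
    ![0,1,1,1,2,2,1,2,2,2],
    ![0,1,1,1,2,2,1,2,3,3],
    ![0,1,1,2,2,2,2,2,2,2],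
    ![0,1,1,2,2,2,2,3,3,3],
    ![0,1,1,2,2,2,3,3,3,3],
    ![0,1,2,2,3,3,2,3,4,4]]

/-- The `ℂ`-algebra homomorphism `φ : ℂ[x₁, ..., x₁₀] → ℂ[z_{ij} : 1 ≤ j ≤ i ≤ 4]`
sending `x_k` to the monomial `z^{h_k}` (the ten entries `z_{ij}` are indexed by
`Fin 10` in the order `z₁₁, z₂₁, z₂₂, z₃₁, z₃₂, z₃₃, z₄₁, z₄₂, z₄₃, z₄₄`). -/
noncomputable def φ3 : MvPolynomial (Fin 10) ℂ →ₐ[ℂ] MvPolynomial (Fin 10) ℂ :=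
  aeval (fun k => ∏ j : Fin 10, (X j : MvPolynomial (Fin 10) ℂ) ^ hive3Gens k j)

/-- Exponent vector of the image of a monomial. -/
noncomputable def hiveW (a : Fin 10 →₀ ℕ) : Fin 10 →₀ ℕ :=
  Finsupp.equivFunOnFinite.symm (fun j => ∑ k : Fin 10, hive3Gens k j * a k)

lemma hive_monomial (a : Fin 10 →₀ ℕ) (c : ℂ) :
    monomial a c = C c * ∏ i : Fin 10, (X i : MvPolynomial (Fin 10) ℂ) ^ a i := by
  rw [monomial_eq, Finsupp.prod_fintype _ _ (by simp)]

lemma hive_phi_monomial (a : Fin 10 →₀ ℕ) (c : ℂ) :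
    φ3 (monomial a c) = monomial (hiveW a) c := by
  rw [hive_monomial, hive_monomial]
  simp only [φ3, map_mul, map_prod, map_pow, aeval_X, algHom_C, algebraMap_eq]
  refine congrArg (fun q => C c * q) ?_
  simp only [← Finset.prod_pow, ← pow_mul]
  rw [Finset.prod_comm]
  refine Finset.prod_congr rfl fun j _ => ?_
  rw [Finset.prod_pow_eq_pow_sum]
  rfl

lemma hive_key (a b : Fin 10 →₀ ℕ) (c : ℂ) (h : hiveW a = hiveW b) (hle : b 0 ≤ a 0) :
    (X 0 * X 5 * X 6 - X 4 * X 9 : MvPolynomial (Fin 10) ℂ) ∣ monomial a c - monomial b c := by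
  have H : ∀ j, ∑ k : Fin 10, hive3Gens k j * a k = ∑ k : Fin 10, hive3Gens k j * b k :=
    fun j => DFunLike.congr_fun h j
  have h1 := H 1
  have h2 := H 2
  have h3 := H 3
  have h4 := H 4
  have h5 := H 5
  have h6 := H 6
  have h7 := H 7
  have h8 := H 8
  have h9 := H 9
  clear H h
  have Q : ∀ f : Fin 10 → ℕ, ∑ i, f i =
      f 0 + f 1 + f 2 + f 3 + f 4 + f 5 + f 6 + f 7 + f 8 + f 9 := by
    intro f
    simp only [Fin.sum_univ_castSucc, Finset.univ_eq_empty, Finset.sum_empty, zero_add]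
    rfl
  simp [Q, hive3Gens] at h1 h2 h3 h4 h5 h6 h7 h8 h9
  obtain ⟨t, ht⟩ := Nat.exists_eq_add_of_le hle
  have e1 : a 1 = b 1 := by omega
  have e2 : a 2 = b 2 := by omega
  have e3 : a 3 = b 3 := by omega
  have e4 : b 4 = a 4 + t := by omega
  have e5 : a 5 = b 5 + t := by omega
  have e6 : a 6 = b 6 + t := by omega
  have e7 : a 7 = b 7 := by omega
  have e8 : a 8 = b 8 := by omega
  have e9 : b 9 = a 9 + t := by omega
  rw [hive_monomial, hive_monomial]
  have d := sub_dvd_pow_sub_pow (X 0 * X 5 * X 6 : MvPolynomial (Fin 10) ℂ) (X 4 * X 9) t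
  refine d.trans ⟨C c * (X 0 ^ b 0 * X 1 ^ b 1 * X 2 ^ b 2 * X 3 ^ b 3 * X 4 ^ a 4 * X 5 ^ b 5
    * X 6 ^ b 6 * X 7 ^ b 7 * X 8 ^ b 8 * X 9 ^ a 9), ?_⟩
  have P : ∀ f : Fin 10 → MvPolynomial (Fin 10) ℂ, ∏ i, f i =
      f 0 * f 1 * f 2 * f 3 * f 4 * f 5 * f 6 * f 7 * f 8 * f 9 := by
    intro f
    simp only [Fin.prod_univ_castSucc, Finset.univ_eq_empty, Finset.prod_empty, one_mul]
    rfl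
  rw [P, P, ht, e1, e2, e3, e4, e5, e6, e7, e8, e9]
  simp only [pow_add, mul_pow]
  ring

lemma hive_key' (a b : Fin 10 →₀ ℕ) (c : ℂ) (h : hiveW a = hiveW b) :
    (X 0 * X 5 * X 6 - X 4 * X 9 : MvPolynomial (Fin 10) ℂ) ∣ monomial a c - monomial b c := by
  rcases le_total (b 0) (a 0) with hl | hl
  · exact hive_key a b c h hl
  · exact (dvd_sub_comm).1 (hive_key b a c h.symm hl)

lemma hive_ker : RingHom.ker φ3 =
      Ideal.span {(X 0 * X 5 * X 6 - X 4 * X 9 : MvPolynomial (Fin 10) ℂ)} := by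
  apply le_antisymm
  · let S : MvPolynomial (Fin 10) ℂ →ₗ[ℂ] MvPolynomial (Fin 10) ℂ :=
      (basisMonomials (Fin 10) ℂ).constr ℂ (fun b => monomial (Function.invFun hiveW b) (1 : ℂ))
    have hS : ∀ b (c : ℂ), S (monomial b c) = monomial (Function.invFun hiveW b) c := by
      intro b c
      have : monomial b c = c • basisMonomials (Fin 10) ℂ b := by
        simp [smul_monomial]
      rw [this, map_smul, Module.Basis.constr_basis, smul_monomial, smul_eq_mul, mul_one]
    have key : ∀ p, (X 0 * X 5 * X 6 - X 4 * X 9 : MvPolynomial (Fin 10) ℂ) ∣ p - S (φ3 p) := by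
      intro p
      induction p using MvPolynomial.induction_on' with
      | monomial a c =>
        rw [hive_phi_monomial, hS]
        exact hive_key' _ _ _ (Function.invFun_eq ⟨a, rfl⟩).symm
      | add p q hp hq =>
        rw [map_add, map_add, add_sub_add_comm]
        exact dvd_add hp hq
    intro p hp
    rw [RingHom.mem_ker] at hp
    have := key p
    rw [hp, map_zero, sub_zero] at this
    exact Ideal.mem_span_singleton.2 this
  · rw [Ideal.span_singleton_le_iff_mem, RingHom.mem_ker]
    simp [φ3, Fin.prod_univ_succ, hive3Gens]
    ring

/-- The kernel of `φ` is the principal ideal generated by the binomial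
`x₁x₆x₇ - x₅x₁₀`; in particular the hive algebra `HA(3)`, the image of `φ`, is
isomorphic to `ℂ[x₁, ..., x₁₀] / ⟨x₁x₆x₇ - x₅x₁₀⟩`. -/
theorem hive3_algebra_presentation :
    RingHom.ker φ3 =
      Ideal.span {(X 0 * X 5 * X 6 - X 4 * X 9 : MvPolynomial (Fin 10) ℂ)} ∧
    Nonempty ((MvPolynomial (Fin 10) ℂ ⧸
        Ideal.span {(X 0 * X 5 * X 6 - X 4 * X 9 : MvPolynomial (Fin 10) ℂ)})
      ≃ₐ[ℂ] φ3.range) := by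
  refine ⟨hive_ker, ?_⟩
  rw [← hive_ker]
  exact ⟨Ideal.quotientKerEquivRange φ3⟩
end

section
/- Let h_1, ..., h_20 be the twenty generating hives of H(4) (listed in the context), and let φ : C[x_1, ..., x_20] → C[z_{ij} : 1 ≤ j ≤ i ≤ 5] be the C-algebra homomorphism sending x_k to the monomial z^{h_k} = Π_{i,j} z_{ij}^{(h_k)_{ij}}. Then the kernel of φ is the ideal generated by the fifteen binomials: x_1 x_7 x_9 − x_6 x_15, x_1 x_8 x_9 − x_6 x_16, x_1 x_11 x_12 − x_10 x_18, x_6 x_11 x_12 − x_10 x_20, x_2 x_8 x_10 − x_7 x_17, x_2 x_8 x_12 − x_7 x_19, x_6 x_18 − x_1 x_20, x_7 x_16 − x_8 x_15, x_10 x_19 − x_12 x_17, x_15 x_17 − x_2 x_10 x_16, x_15 x_19 − x_2 x_12 x_16, x_15 x_20 − x_7 x_9 x_18, x_16 x_20 − x_8 x_9 x_18, x_17 x_20 − x_6 x_11 x_19, x_17 x_18 − x_1 x_11 x_19. -/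
open MvPolynomial

/-- The twenty generating hives of the hive monoid `H(4)`, written as tuples
`(h₁₁, h₂₁, h₂₂, h₃₁, h₃₂, h₃₃, h₄₁, h₄₂, h₄₃, h₄₄, h₅₁, h₅₂, h₅₃, h₅₄, h₅₅)`
of natural numbers. -/
def hive4Gens : Fin 20 → Fin 15 → ℕ :=
  ![![0,0,1,0,1,1,0,1,1,1,0,1,1,1,1],
    ![0,0,1,0,1,2,0,1,2,2,0,1,2,2,2],
    ![0,0,1,0,1,2,0,1,2,3,0,1,2,3,3],
    ![0,0,1,0,1,2,0,1,2,3,0,1,2,3,4],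
    ![0,1,1,1,1,1,1,1,1,1,1,1,1,1,1],
    ![0,1,1,1,2,2,1,2,2,2,1,2,2,2,2],
    ![0,1,1,1,2,2,1,2,3,3,1,2,3,3,3],
    ![0,1,1,1,2,2,1,2,3,3,1,2,3,4,4],
    ![0,1,1,2,2,2,2,2,2,2,2,2,2,2,2],
    ![0,1,1,2,2,2,2,3,3,3,2,3,3,3,3],
    ![0,1,1,2,2,2,2,3,3,3,2,3,4,4,4],
    ![0,1,1,2,2,2,3,3,3,3,3,3,3,3,3],
    ![0,1,1,2,2,2,3,3,3,3,3,4,4,4,4],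
    ![0,1,1,2,2,2,3,3,3,3,4,4,4,4,4],
    ![0,1,2,2,3,3,2,3,4,4,2,3,4,4,4],
    ![0,1,2,2,3,3,2,3,4,4,2,3,4,5,5],
    ![0,1,2,2,3,4,2,4,5,5,2,4,5,6,6],
    ![0,1,2,2,3,3,3,4,4,4,3,4,5,5,5],
    ![0,1,2,2,3,4,3,4,5,5,3,4,5,6,6],
    ![0,2,2,3,4,4,4,5,5,5,4,5,6,6,6]]

/-- The `ℂ`-algebra homomorphism `φ : ℂ[x₁, ..., x₂₀] → ℂ[z_{ij} : 1 ≤ j ≤ i ≤ 5]`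
sending `x_k` to the monomial `z^{h_k}` (the fifteen entries `z_{ij}` are indexed by
`Fin 15`, row by row). -/
noncomputable def φ4 : MvPolynomial (Fin 20) ℂ →ₐ[ℂ] MvPolynomial (Fin 15) ℂ :=
  aeval (fun k => ∏ j : Fin 15, (X j : MvPolynomial (Fin 15) ℂ) ^ hive4Gens k j)


namespace Hive4

/-- The ideal generated by the fifteen binomials. -/
noncomputable def I4 : Ideal (MvPolynomial (Fin 20) ℂ) :=
      Ideal.span {(X 0 * X 6 * X 8 - X 5 * X 14 : MvPolynomial (Fin 20) ℂ),
        X 0 * X 7 * X 8 - X 5 * X 15,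
        X 0 * X 10 * X 11 - X 9 * X 17,
        X 5 * X 10 * X 11 - X 9 * X 19,
        X 1 * X 7 * X 9 - X 6 * X 16,
        X 1 * X 7 * X 11 - X 6 * X 18,
        X 5 * X 17 - X 0 * X 19,
        X 6 * X 15 - X 7 * X 14,
        X 9 * X 18 - X 11 * X 16,
        X 14 * X 16 - X 1 * X 9 * X 15,
        X 14 * X 18 - X 1 * X 11 * X 15,
        X 14 * X 19 - X 6 * X 8 * X 17,
        X 15 * X 19 - X 7 * X 8 * X 17,
        X 16 * X 19 - X 5 * X 10 * X 18,
        X 16 * X 17 - X 0 * X 10 * X 18}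

/-- The exponent vector of the image of the monomial with exponent `e`. -/
noncomputable def img (e : Fin 20 →₀ ℕ) : Fin 15 →₀ ℕ :=
  Finsupp.equivFunOnFinite.symm fun j => ∑ k, e k * hive4Gens k j

lemma phi_monomial (e : Fin 20 →₀ ℕ) (c : ℂ) :
    φ4 (monomial e c) = monomial (img e) c := by
  rw [φ4, aeval_monomial, monomial_eq (s := img e), Finsupp.prod_fintype _ _ (by simp),
    Finsupp.prod_fintype _ _ (by simp)]
  rw [algebraMap_eq]
  refine congrArg (fun t => C c * t) ?_
  simp only [← Finset.prod_pow]
  rw [Finset.prod_comm]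
  refine Finset.prod_congr rfl fun j _ => ?_
  simp only [← pow_mul]
  rw [Finset.prod_pow_eq_pow_sum]
  refine congrArg (fun t => X j ^ t) ?_
  simp [img, mul_comm]

/-- The `k`-th hive as an exponent vector. -/
noncomputable def row (k : Fin 20) : Fin 15 →₀ ℕ :=
  Finsupp.equivFunOnFinite.symm (hive4Gens k)

lemma phi_X (k : Fin 20) : φ4 (X k) = monomial (row k) 1 := by
  rw [φ4, aeval_X, monomial_eq, Finsupp.prod_fintype _ _ (by simp), C_1, one_mul]
  rfl

lemma I4_le : I4 ≤ RingHom.ker φ4 := by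
  rw [I4, Ideal.span_le]
  intro p hp
  simp only [Set.mem_insert_iff, Set.mem_singleton_iff] at hp
  simp only [SetLike.mem_coe, RingHom.mem_ker]
  rcases hp with rfl | rfl | rfl | rfl | rfl | rfl | rfl | rfl | rfl | rfl | rfl | rfl | rfl |
    rfl | rfl <;>
  · simp only [map_sub, map_mul, phi_X, monomial_mul, mul_one]
    rw [sub_eq_zero]
    refine congrArg (fun m => monomial m (1 : ℂ)) ?_
    ext j
    simp only [row, Finsupp.add_apply, Finsupp.equivFunOnFinite_symm_apply_apply]
    revert j
    decide

/-- A term-order weight selecting quadratic initial terms. -/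
def w : Fin 20 → ℕ :=
  ![4, 2, 13, 5, 2, 17, 15, 5, 7, 18, 10, 9, 29, 23, 12, 5, 30, 8, 14, 19]

/-- Standard exponents: divisible by none of the initial terms. -/
def Std (e : Fin 20 →₀ ℕ) : Prop :=
  (e 5 = 0 ∨ e 14 = 0) ∧ (e 5 = 0 ∨ e 15 = 0) ∧ (e 9 = 0 ∨ e 17 = 0) ∧ (e 9 = 0 ∨ e 19 = 0) ∧
  (e 6 = 0 ∨ e 16 = 0) ∧ (e 6 = 0 ∨ e 18 = 0) ∧ (e 5 = 0 ∨ e 17 = 0) ∧ (e 6 = 0 ∨ e 15 = 0) ∧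
  (e 11 = 0 ∨ e 16 = 0) ∧ (e 14 = 0 ∨ e 16 = 0) ∧ (e 14 = 0 ∨ e 18 = 0) ∧ (e 14 = 0 ∨ e 19 = 0) ∧
  (e 15 = 0 ∨ e 19 = 0) ∧ (e 16 = 0 ∨ e 19 = 0) ∧ (e 16 = 0 ∨ e 17 = 0)

lemma step (e P Q : Fin 20 →₀ ℕ) (hP : P ≤ e)
    (hI : (monomial P 1 - monomial Q 1 : MvPolynomial (Fin 20) ℂ) ∈ I4)
    (hw : Finsupp.weight w Q < Finsupp.weight w P)
    (ih : ∀ e', Finsupp.weight w e' < Finsupp.weight w e →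
      ∃ s, Std s ∧ (monomial e' 1 - monomial s 1 : MvPolynomial (Fin 20) ℂ) ∈ I4) :
    ∃ s, Std s ∧ (monomial e 1 - monomial s 1 : MvPolynomial (Fin 20) ℂ) ∈ I4 := by
  obtain ⟨r, rfl⟩ := exists_add_of_le hP
  obtain ⟨s, hs, hsI⟩ := ih (Q + r) (by simp only [map_add]; omega)
  refine ⟨s, hs, ?_⟩
  have h := I4.add_mem (I4.mul_mem_right (monomial r 1) hI) hsI
  convert h using 1
  simp only [sub_mul, monomial_mul, mul_one]
  ring

lemma pair_le {e : Fin 20 →₀ ℕ} {i j : Fin 20} (hij : i ≠ j) (hi : e i ≠ 0) (hj : e j ≠ 0) :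
    Finsupp.single i 1 + Finsupp.single j 1 ≤ e := by
  intro k
  simp only [Finsupp.add_apply, Finsupp.single_apply]
  by_cases h1 : i = k
  · subst h1
    rw [if_pos rfl, if_neg (Ne.symm hij)]
    omega
  · by_cases h2 : j = k
    · subst h2
      rw [if_neg h1, if_pos rfl]
      omega
    · rw [if_neg h1, if_neg h2]
      omega

lemma step2 (e : Fin 20 →₀ ℕ) (i j a b : Fin 20) (hij : i ≠ j) (hi : e i ≠ 0) (hj : e j ≠ 0)
    (hI : (X i * X j - X a * X b : MvPolynomial (Fin 20) ℂ) ∈ I4)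
    (hw : w a + w b < w i + w j)
    (ih : ∀ e', Finsupp.weight w e' < Finsupp.weight w e →
      ∃ s, Std s ∧ (monomial e' 1 - monomial s 1 : MvPolynomial (Fin 20) ℂ) ∈ I4) :
    ∃ s, Std s ∧ (monomial e 1 - monomial s 1 : MvPolynomial (Fin 20) ℂ) ∈ I4 := by
  refine step e _ (Finsupp.single a 1 + Finsupp.single b 1) (pair_le hij hi hj) ?_ ?_ ih
  · simpa only [X, monomial_mul, mul_one] using hI
  · simpa only [map_add, Finsupp.weight_single, one_smul] using hw

lemma step3 (e : Fin 20 →₀ ℕ) (i j a b c : Fin 20) (hij : i ≠ j) (hi : e i ≠ 0) (hj : e j ≠ 0)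
    (hI : (X i * X j - X a * X b * X c : MvPolynomial (Fin 20) ℂ) ∈ I4)
    (hw : w a + w b + w c < w i + w j)
    (ih : ∀ e', Finsupp.weight w e' < Finsupp.weight w e →
      ∃ s, Std s ∧ (monomial e' 1 - monomial s 1 : MvPolynomial (Fin 20) ℂ) ∈ I4) :
    ∃ s, Std s ∧ (monomial e 1 - monomial s 1 : MvPolynomial (Fin 20) ℂ) ∈ I4 := by
  refine step e _ (Finsupp.single a 1 + Finsupp.single b 1 + Finsupp.single c 1)
    (pair_le hij hi hj) ?_ ?_ ih
  · simpa only [X, monomial_mul, mul_one] using hI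
  · simpa only [map_add, Finsupp.weight_single, one_smul] using hw

lemma gen_mem {p q : MvPolynomial (Fin 20) ℂ} (h : p ∈ I4) (hq : q = p ∨ q = -p) : q ∈ I4 := by
  rcases hq with rfl | rfl
  · exact h
  · exact I4.neg_mem h

lemma exists_std (e : Fin 20 →₀ ℕ) :
    ∃ s, Std s ∧ (monomial e 1 - monomial s 1 : MvPolynomial (Fin 20) ℂ) ∈ I4 := by
  induction h : Finsupp.weight w e using Nat.strong_induction_on generalizing e with
  | _ n ih =>
  subst h
  replace ih := fun e' h => ih _ h e' rfl
  by_cases hs : Std e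
  · exact ⟨e, hs, by simp⟩
  simp only [Std, not_and_or, not_or] at hs
  rcases hs with hs | hs | hs | hs | hs | hs | hs | hs | hs | hs | hs | hs | hs | hs | hs
  · exact step3 e 5 14 0 6 8 (by decide) hs.1 hs.2
      (gen_mem (p := X 0 * X 6 * X 8 - X 5 * X 14) (Ideal.subset_span (by
        exact Set.mem_insert _ _))
        (Or.inr (neg_sub _ _).symm)) (by decide) ih
  · exact step3 e 5 15 0 7 8 (by decide) hs.1 hs.2
      (gen_mem (p := X 0 * X 7 * X 8 - X 5 * X 15) (Ideal.subset_span (by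
        iterate 1 apply Set.mem_insert_of_mem
        exact Set.mem_insert _ _))
        (Or.inr (neg_sub _ _).symm)) (by decide) ih
  · exact step3 e 9 17 0 10 11 (by decide) hs.1 hs.2
      (gen_mem (p := X 0 * X 10 * X 11 - X 9 * X 17) (Ideal.subset_span (by
        iterate 2 apply Set.mem_insert_of_mem
        exact Set.mem_insert _ _))
        (Or.inr (neg_sub _ _).symm)) (by decide) ih
  · exact step3 e 9 19 5 10 11 (by decide) hs.1 hs.2
      (gen_mem (p := X 5 * X 10 * X 11 - X 9 * X 19) (Ideal.subset_span (by
        iterate 3 apply Set.mem_insert_of_mem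
        exact Set.mem_insert _ _))
        (Or.inr (neg_sub _ _).symm)) (by decide) ih
  · exact step3 e 6 16 1 7 9 (by decide) hs.1 hs.2
      (gen_mem (p := X 1 * X 7 * X 9 - X 6 * X 16) (Ideal.subset_span (by
        iterate 4 apply Set.mem_insert_of_mem
        exact Set.mem_insert _ _))
        (Or.inr (neg_sub _ _).symm)) (by decide) ih
  · exact step3 e 6 18 1 7 11 (by decide) hs.1 hs.2
      (gen_mem (p := X 1 * X 7 * X 11 - X 6 * X 18) (Ideal.subset_span (by
        iterate 5 apply Set.mem_insert_of_mem
        exact Set.mem_insert _ _))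
        (Or.inr (neg_sub _ _).symm)) (by decide) ih
  · exact step2 e 5 17 0 19 (by decide) hs.1 hs.2
      (gen_mem (p := X 5 * X 17 - X 0 * X 19) (Ideal.subset_span (by
        iterate 6 apply Set.mem_insert_of_mem
        exact Set.mem_insert _ _))
        (Or.inl rfl)) (by decide) ih
  · exact step2 e 6 15 7 14 (by decide) hs.1 hs.2
      (gen_mem (p := X 6 * X 15 - X 7 * X 14) (Ideal.subset_span (by
        iterate 7 apply Set.mem_insert_of_mem
        exact Set.mem_insert _ _))
        (Or.inl rfl)) (by decide) ih
  · exact step2 e 11 16 9 18 (by decide) hs.1 hs.2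
      (gen_mem (p := X 9 * X 18 - X 11 * X 16) (Ideal.subset_span (by
        iterate 8 apply Set.mem_insert_of_mem
        exact Set.mem_insert _ _))
        (Or.inr (neg_sub _ _).symm)) (by decide) ih
  · exact step3 e 14 16 1 9 15 (by decide) hs.1 hs.2
      (gen_mem (p := X 14 * X 16 - X 1 * X 9 * X 15) (Ideal.subset_span (by
        iterate 9 apply Set.mem_insert_of_mem
        exact Set.mem_insert _ _))
        (Or.inl rfl)) (by decide) ih
  · exact step3 e 14 18 1 11 15 (by decide) hs.1 hs.2
      (gen_mem (p := X 14 * X 18 - X 1 * X 11 * X 15) (Ideal.subset_span (by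
        iterate 10 apply Set.mem_insert_of_mem
        exact Set.mem_insert _ _))
        (Or.inl rfl)) (by decide) ih
  · exact step3 e 14 19 6 8 17 (by decide) hs.1 hs.2
      (gen_mem (p := X 14 * X 19 - X 6 * X 8 * X 17) (Ideal.subset_span (by
        iterate 11 apply Set.mem_insert_of_mem
        exact Set.mem_insert _ _))
        (Or.inl rfl)) (by decide) ih
  · exact step3 e 15 19 7 8 17 (by decide) hs.1 hs.2
      (gen_mem (p := X 15 * X 19 - X 7 * X 8 * X 17) (Ideal.subset_span (by
        iterate 12 apply Set.mem_insert_of_mem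
        exact Set.mem_insert _ _))
        (Or.inl rfl)) (by decide) ih
  · exact step3 e 16 19 5 10 18 (by decide) hs.1 hs.2
      (gen_mem (p := X 16 * X 19 - X 5 * X 10 * X 18) (Ideal.subset_span (by
        iterate 13 apply Set.mem_insert_of_mem
        exact Set.mem_insert _ _))
        (Or.inl rfl)) (by decide) ih
  · exact step3 e 16 17 0 10 18 (by decide) hs.1 hs.2
      (gen_mem (p := X 16 * X 17 - X 0 * X 10 * X 18) (Ideal.subset_span (by
        iterate 14 apply Set.mem_insert_of_mem
        exact Set.mem_singleton _))
        (Or.inl rfl)) (by decide) ih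

/-- The union of the fourteen coordinate cones of standard exponents. -/
def Cones (a5 a6 a9 a11 a14 a15 a16 a17 a18 a19 : ℕ) : Prop :=
    (a5 = 0 ∧ a6 = 0 ∧ a9 = 0 ∧ a14 = 0 ∧ a15 = 0 ∧ a16 = 0) ∨
    (a5 = 0 ∧ a6 = 0 ∧ a9 = 0 ∧ a14 = 0 ∧ a16 = 0 ∧ a19 = 0) ∨
    (a5 = 0 ∧ a6 = 0 ∧ a9 = 0 ∧ a16 = 0 ∧ a18 = 0 ∧ a19 = 0) ∨
    (a5 = 0 ∧ a6 = 0 ∧ a11 = 0 ∧ a14 = 0 ∧ a17 = 0 ∧ a19 = 0) ∨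
    (a5 = 0 ∧ a6 = 0 ∧ a14 = 0 ∧ a16 = 0 ∧ a17 = 0 ∧ a19 = 0) ∨
    (a5 = 0 ∧ a6 = 0 ∧ a16 = 0 ∧ a17 = 0 ∧ a18 = 0 ∧ a19 = 0) ∨
    (a5 = 0 ∧ a9 = 0 ∧ a14 = 0 ∧ a15 = 0 ∧ a16 = 0 ∧ a18 = 0) ∨
    (a5 = 0 ∧ a9 = 0 ∧ a15 = 0 ∧ a16 = 0 ∧ a18 = 0 ∧ a19 = 0) ∨
    (a5 = 0 ∧ a15 = 0 ∧ a16 = 0 ∧ a17 = 0 ∧ a18 = 0 ∧ a19 = 0) ∨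
    (a6 = 0 ∧ a9 = 0 ∧ a14 = 0 ∧ a15 = 0 ∧ a16 = 0 ∧ a17 = 0) ∨
    (a6 = 0 ∧ a11 = 0 ∧ a14 = 0 ∧ a15 = 0 ∧ a17 = 0 ∧ a19 = 0) ∨
    (a6 = 0 ∧ a14 = 0 ∧ a15 = 0 ∧ a16 = 0 ∧ a17 = 0 ∧ a19 = 0) ∨
    (a9 = 0 ∧ a14 = 0 ∧ a15 = 0 ∧ a16 = 0 ∧ a17 = 0 ∧ a18 = 0) ∨
    (a14 = 0 ∧ a15 = 0 ∧ a16 = 0 ∧ a17 = 0 ∧ a18 = 0 ∧ a19 = 0)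

/-- Standard exponents lie in one of fourteen coordinate cones. -/
lemma cones (a5 a6 a9 a11 a14 a15 a16 a17 a18 a19 : ℕ)
    (h0 : a5 = 0 ∨ a14 = 0)
    (h1 : a5 = 0 ∨ a15 = 0)
    (h2 : a9 = 0 ∨ a17 = 0)
    (h3 : a9 = 0 ∨ a19 = 0)
    (h4 : a6 = 0 ∨ a16 = 0)
    (h5 : a6 = 0 ∨ a18 = 0)
    (h6 : a5 = 0 ∨ a17 = 0)
    (h7 : a6 = 0 ∨ a15 = 0)
    (h8 : a11 = 0 ∨ a16 = 0)
    (h9 : a14 = 0 ∨ a16 = 0)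
    (h10 : a14 = 0 ∨ a18 = 0)
    (h11 : a14 = 0 ∨ a19 = 0)
    (h12 : a15 = 0 ∨ a19 = 0)
    (h13 : a16 = 0 ∨ a19 = 0)
    (h14 : a16 = 0 ∨ a17 = 0) :
    Cones a5 a6 a9 a11 a14 a15 a16 a17 a18 a19 := by
  unfold Cones
  grind (splits := 40)

set_option maxHeartbeats 4000000 in
lemma arith_le (a5 a6 a9 a11 a14 a15 a16 a17 a18 a19 b5 b6 b9 b11 b14 b15 b16 b17 b18 b19 : ℕ)
    (ha : Cones a5 a6 a9 a11 a14 a15 a16 a17 a18 a19)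
    (hb : Cones b5 b6 b9 b11 b14 b15 b16 b17 b18 b19)
    (e1 : a5 + a19 + b14 + b15 = b5 + b19 + a14 + a15)
    (e2 : a6 + a14 + b16 + b18 = b6 + b14 + a16 + a18)
    (e3 : a9 + a16 + b17 + b19 = b9 + b16 + a17 + a19)
    (e4 : a11 + a17 + a18 + a19 = b11 + b17 + b18 + b19) :
    a14 ≤ b14 ∧ a15 ≤ b15 ∧ a16 ≤ b16 ∧ a17 ≤ b17 ∧ a18 ≤ b18 ∧ a19 ≤ b19 := by
  unfold Cones at ha hb
  rcases ha with ha | ha | ha | ha | ha | ha | ha | ha | ha | ha | ha | ha | ha | ha <;>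
  rcases hb with hb | hb | hb | hb | hb | hb | hb | hb | hb | hb | hb | hb | hb | hb <;>
  omega

lemma arith (a5 a6 a9 a11 a14 a15 a16 a17 a18 a19 b5 b6 b9 b11 b14 b15 b16 b17 b18 b19 : ℕ)
    (ha : Cones a5 a6 a9 a11 a14 a15 a16 a17 a18 a19)
    (hb : Cones b5 b6 b9 b11 b14 b15 b16 b17 b18 b19)
    (e1 : a5 + a19 + b14 + b15 = b5 + b19 + a14 + a15)
    (e2 : a6 + a14 + b16 + b18 = b6 + b14 + a16 + a18)
    (e3 : a9 + a16 + b17 + b19 = b9 + b16 + a17 + a19)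
    (e4 : a11 + a17 + a18 + a19 = b11 + b17 + b18 + b19) :
    a5 = b5 ∧ a6 = b6 ∧ a9 = b9 ∧ a11 = b11 ∧ a14 = b14 ∧ a15 = b15 ∧ a16 = b16 ∧ a17 = b17 ∧ a18 = b18 ∧ a19 = b19 := by
  have h1 := arith_le _ _ _ _ _ _ _ _ _ _ _ _ _ _ _ _ _ _ _ _ ha hb e1 e2 e3 e4
  have h2 := arith_le _ _ _ _ _ _ _ _ _ _ _ _ _ _ _ _ _ _ _ _ hb ha e1.symm e2.symm e3.symm
    e4.symm
  clear ha hb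
  omega

lemma reduce (a0 a1 a2 a3 a4 a5 a6 a7 a8 a9 a10 a11 a12 a13 a14 a15 a16 a17 a18 a19 : ℕ)
    (b0 b1 b2 b3 b4 b5 b6 b7 b8 b9 b10 b11 b12 b13 b14 b15 b16 b17 b18 b19 : ℕ)
    (e1 : a4 + a5 + a6 + a7 + a8 + a9 + a10 + a11 + a12 + a13 + a14 + a15 + a16 + a17 + a18 + a19 * 2 =
      b4 + b5 + b6 + b7 + b8 + b9 + b10 + b11 + b12 + b13 + b14 + b15 + b16 + b17 + b18 + b19 * 2)
    (e2 : a0 + a1 + a2 + a3 + a4 + a5 + a6 + a7 + a8 + a9 + a10 + a11 + a12 + a13 + a14 * 2 + a15 * 2 + a16 * 2 + a17 * 2 + a18 * 2 + a19 * 2 =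
      b0 + b1 + b2 + b3 + b4 + b5 + b6 + b7 + b8 + b9 + b10 + b11 + b12 + b13 + b14 * 2 + b15 * 2 + b16 * 2 + b17 * 2 + b18 * 2 + b19 * 2)
    (e3 : a4 + a5 + a6 + a7 + a8 * 2 + a9 * 2 + a10 * 2 + a11 * 2 + a12 * 2 + a13 * 2 + a14 * 2 + a15 * 2 + a16 * 2 + a17 * 2 + a18 * 2 + a19 * 3 =
      b4 + b5 + b6 + b7 + b8 * 2 + b9 * 2 + b10 * 2 + b11 * 2 + b12 * 2 + b13 * 2 + b14 * 2 + b15 * 2 + b16 * 2 + b17 * 2 + b18 * 2 + b19 * 3)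
    (e4 : a0 + a1 + a2 + a3 + a4 + a5 * 2 + a6 * 2 + a7 * 2 + a8 * 2 + a9 * 2 + a10 * 2 + a11 * 2 + a12 * 2 + a13 * 2 + a14 * 3 + a15 * 3 + a16 * 3 + a17 * 3 + a18 * 3 + a19 * 4 =
      b0 + b1 + b2 + b3 + b4 + b5 * 2 + b6 * 2 + b7 * 2 + b8 * 2 + b9 * 2 + b10 * 2 + b11 * 2 + b12 * 2 + b13 * 2 + b14 * 3 + b15 * 3 + b16 * 3 + b17 * 3 + b18 * 3 + b19 * 4)
    (e5 : a0 + a1 * 2 + a2 * 2 + a3 * 2 + a4 + a5 * 2 + a6 * 2 + a7 * 2 + a8 * 2 + a9 * 2 + a10 * 2 + a11 * 2 + a12 * 2 + a13 * 2 + a14 * 3 + a15 * 3 + a16 * 4 + a17 * 3 + a18 * 4 + a19 * 4 =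
      b0 + b1 * 2 + b2 * 2 + b3 * 2 + b4 + b5 * 2 + b6 * 2 + b7 * 2 + b8 * 2 + b9 * 2 + b10 * 2 + b11 * 2 + b12 * 2 + b13 * 2 + b14 * 3 + b15 * 3 + b16 * 4 + b17 * 3 + b18 * 4 + b19 * 4)
    (e6 : a4 + a5 + a6 + a7 + a8 * 2 + a9 * 2 + a10 * 2 + a11 * 3 + a12 * 3 + a13 * 3 + a14 * 2 + a15 * 2 + a16 * 2 + a17 * 3 + a18 * 3 + a19 * 4 =
      b4 + b5 + b6 + b7 + b8 * 2 + b9 * 2 + b10 * 2 + b11 * 3 + b12 * 3 + b13 * 3 + b14 * 2 + b15 * 2 + b16 * 2 + b17 * 3 + b18 * 3 + b19 * 4)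
    (e7 : a0 + a1 + a2 + a3 + a4 + a5 * 2 + a6 * 2 + a7 * 2 + a8 * 2 + a9 * 3 + a10 * 3 + a11 * 3 + a12 * 3 + a13 * 3 + a14 * 3 + a15 * 3 + a16 * 4 + a17 * 4 + a18 * 4 + a19 * 5 =
      b0 + b1 + b2 + b3 + b4 + b5 * 2 + b6 * 2 + b7 * 2 + b8 * 2 + b9 * 3 + b10 * 3 + b11 * 3 + b12 * 3 + b13 * 3 + b14 * 3 + b15 * 3 + b16 * 4 + b17 * 4 + b18 * 4 + b19 * 5)
    (e8 : a0 + a1 * 2 + a2 * 2 + a3 * 2 + a4 + a5 * 2 + a6 * 3 + a7 * 3 + a8 * 2 + a9 * 3 + a10 * 3 + a11 * 3 + a12 * 3 + a13 * 3 + a14 * 4 + a15 * 4 + a16 * 5 + a17 * 4 + a18 * 5 + a19 * 5 =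
      b0 + b1 * 2 + b2 * 2 + b3 * 2 + b4 + b5 * 2 + b6 * 3 + b7 * 3 + b8 * 2 + b9 * 3 + b10 * 3 + b11 * 3 + b12 * 3 + b13 * 3 + b14 * 4 + b15 * 4 + b16 * 5 + b17 * 4 + b18 * 5 + b19 * 5)
    (e9 : a0 + a1 * 2 + a2 * 3 + a3 * 3 + a4 + a5 * 2 + a6 * 3 + a7 * 3 + a8 * 2 + a9 * 3 + a10 * 3 + a11 * 3 + a12 * 3 + a13 * 3 + a14 * 4 + a15 * 4 + a16 * 5 + a17 * 4 + a18 * 5 + a19 * 5 =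
      b0 + b1 * 2 + b2 * 3 + b3 * 3 + b4 + b5 * 2 + b6 * 3 + b7 * 3 + b8 * 2 + b9 * 3 + b10 * 3 + b11 * 3 + b12 * 3 + b13 * 3 + b14 * 4 + b15 * 4 + b16 * 5 + b17 * 4 + b18 * 5 + b19 * 5)
    (e10 : a4 + a5 + a6 + a7 + a8 * 2 + a9 * 2 + a10 * 2 + a11 * 3 + a12 * 3 + a13 * 4 + a14 * 2 + a15 * 2 + a16 * 2 + a17 * 3 + a18 * 3 + a19 * 4 =
      b4 + b5 + b6 + b7 + b8 * 2 + b9 * 2 + b10 * 2 + b11 * 3 + b12 * 3 + b13 * 4 + b14 * 2 + b15 * 2 + b16 * 2 + b17 * 3 + b18 * 3 + b19 * 4)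
    (e11 : a0 + a1 + a2 + a3 + a4 + a5 * 2 + a6 * 2 + a7 * 2 + a8 * 2 + a9 * 3 + a10 * 3 + a11 * 3 + a12 * 4 + a13 * 4 + a14 * 3 + a15 * 3 + a16 * 4 + a17 * 4 + a18 * 4 + a19 * 5 =
      b0 + b1 + b2 + b3 + b4 + b5 * 2 + b6 * 2 + b7 * 2 + b8 * 2 + b9 * 3 + b10 * 3 + b11 * 3 + b12 * 4 + b13 * 4 + b14 * 3 + b15 * 3 + b16 * 4 + b17 * 4 + b18 * 4 + b19 * 5)
    (e12 : a0 + a1 * 2 + a2 * 2 + a3 * 2 + a4 + a5 * 2 + a6 * 3 + a7 * 3 + a8 * 2 + a9 * 3 + a10 * 4 + a11 * 3 + a12 * 4 + a13 * 4 + a14 * 4 + a15 * 4 + a16 * 5 + a17 * 5 + a18 * 5 + a19 * 6 =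
      b0 + b1 * 2 + b2 * 2 + b3 * 2 + b4 + b5 * 2 + b6 * 3 + b7 * 3 + b8 * 2 + b9 * 3 + b10 * 4 + b11 * 3 + b12 * 4 + b13 * 4 + b14 * 4 + b15 * 4 + b16 * 5 + b17 * 5 + b18 * 5 + b19 * 6)
    (e13 : a0 + a1 * 2 + a2 * 3 + a3 * 3 + a4 + a5 * 2 + a6 * 3 + a7 * 4 + a8 * 2 + a9 * 3 + a10 * 4 + a11 * 3 + a12 * 4 + a13 * 4 + a14 * 4 + a15 * 5 + a16 * 6 + a17 * 5 + a18 * 6 + a19 * 6 =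
      b0 + b1 * 2 + b2 * 3 + b3 * 3 + b4 + b5 * 2 + b6 * 3 + b7 * 4 + b8 * 2 + b9 * 3 + b10 * 4 + b11 * 3 + b12 * 4 + b13 * 4 + b14 * 4 + b15 * 5 + b16 * 6 + b17 * 5 + b18 * 6 + b19 * 6)
    (e14 : a0 + a1 * 2 + a2 * 3 + a3 * 4 + a4 + a5 * 2 + a6 * 3 + a7 * 4 + a8 * 2 + a9 * 3 + a10 * 4 + a11 * 3 + a12 * 4 + a13 * 4 + a14 * 4 + a15 * 5 + a16 * 6 + a17 * 5 + a18 * 6 + a19 * 6 =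
      b0 + b1 * 2 + b2 * 3 + b3 * 4 + b4 + b5 * 2 + b6 * 3 + b7 * 4 + b8 * 2 + b9 * 3 + b10 * 4 + b11 * 3 + b12 * 4 + b13 * 4 + b14 * 4 + b15 * 5 + b16 * 6 + b17 * 5 + b18 * 6 + b19 * 6) :
    a2 = b2 ∧ a3 = b3 ∧ a4 = b4 ∧ a12 = b12 ∧ a13 = b13 ∧
    a0 + a14 + a15 + a17 = b0 + b14 + b15 + b17 ∧
    a1 + a16 + a18 = b1 + b16 + b18 ∧
    a7 + a15 + a16 + a18 = b7 + b15 + b16 + b18 ∧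
    a8 + a14 + a15 = b8 + b14 + b15 ∧
    a10 + a17 + a19 = b10 + b17 + b19 ∧
    a5 + a19 + b14 + b15 = b5 + b19 + a14 + a15 ∧
    a6 + a14 + b16 + b18 = b6 + b14 + a16 + a18 ∧
    a9 + a16 + b17 + b19 = b9 + b16 + a17 + a19 ∧
    a11 + a17 + a18 + a19 = b11 + b17 + b18 + b19 := by
  zify at e1 e2 e3 e4 e5 e6 e7 e8 e9 e10 e11 e12 e13 e14 ⊢
  refine ⟨?_, ?_, ?_, ?_, ?_, ?_, ?_, ?_, ?_, ?_, ?_, ?_, ?_, ?_⟩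
  · linear_combination (-1) * e8 + (1) * e9 + (1) * e13 + (-1) * e14
  · linear_combination (-1) * e13 + (1) * e14
  · linear_combination (1) * e1 + (1) * e2 + (-1) * e4
  · linear_combination (1) * e6 + (-1) * e7 + (-1) * e10 + (1) * e11
  · linear_combination (-1) * e6 + (1) * e10
  · linear_combination (-1) * e1 + (1) * e2 + (1) * e4 + (-1) * e5
  · linear_combination (-1) * e4 + (1) * e5 + (1) * e8 + (-1) * e9
  · linear_combination (1) * e8 + (-1) * e9 + (-1) * e12 + (1) * e13
  · linear_combination (-1) * e1 + (1) * e3 + (1) * e4 + (-1) * e7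
  · linear_combination (1) * e7 + (-1) * e8 + (-1) * e11 + (1) * e12
  · linear_combination (1) * e1 + (-1) * e2 + (-1) * e3 + (1) * e5 + (1) * e7 + (-1) * e8
  · linear_combination (1) * e4 + (-1) * e5 + (-1) * e7 + (1) * e9 + (1) * e12 + (-1) * e13
  · linear_combination (1) * e3 + (-1) * e4 + (-1) * e6 + (1) * e8 + (1) * e11 + (-1) * e12
  · linear_combination (-1) * e3 + (1) * e6 + (1) * e7 + (-1) * e11

lemma sum_expand (f : Fin 20 → ℕ) : ∑ k, f k = f 0 + f 1 + f 2 + f 3 + f 4 + f 5 + f 6 + f 7 + f 8 + f 9 + f 10 + f 11 + f 12 + f 13 + f 14 + f 15 + f 16 + f 17 + f 18 + f 19 := by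
  simp only [Fin.sum_univ_castSucc, Fin.sum_univ_zero, zero_add]
  rfl

lemma coord1 (a : Fin 20 → ℕ) : ∑ k, a k * hive4Gens k 1 =
    a 4 + a 5 + a 6 + a 7 + a 8 + a 9 + a 10 + a 11 + a 12 + a 13 + a 14 + a 15 + a 16 + a 17 + a 18 + a 19 * 2 := by
  rw [sum_expand]
  simp only [hive4Gens]
  simp
  try omega

lemma coord2 (a : Fin 20 → ℕ) : ∑ k, a k * hive4Gens k 2 =
    a 0 + a 1 + a 2 + a 3 + a 4 + a 5 + a 6 + a 7 + a 8 + a 9 + a 10 + a 11 + a 12 + a 13 + a 14 * 2 + a 15 * 2 + a 16 * 2 + a 17 * 2 + a 18 * 2 + a 19 * 2 := by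
  rw [sum_expand]
  simp only [hive4Gens]
  simp
  try omega

lemma coord3 (a : Fin 20 → ℕ) : ∑ k, a k * hive4Gens k 3 =
    a 4 + a 5 + a 6 + a 7 + a 8 * 2 + a 9 * 2 + a 10 * 2 + a 11 * 2 + a 12 * 2 + a 13 * 2 + a 14 * 2 + a 15 * 2 + a 16 * 2 + a 17 * 2 + a 18 * 2 + a 19 * 3 := by
  rw [sum_expand]
  simp only [hive4Gens]
  simp
  try omega

lemma coord4 (a : Fin 20 → ℕ) : ∑ k, a k * hive4Gens k 4 =
    a 0 + a 1 + a 2 + a 3 + a 4 + a 5 * 2 + a 6 * 2 + a 7 * 2 + a 8 * 2 + a 9 * 2 + a 10 * 2 + a 11 * 2 + a 12 * 2 + a 13 * 2 + a 14 * 3 + a 15 * 3 + a 16 * 3 + a 17 * 3 + a 18 * 3 + a 19 * 4 := by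
  rw [sum_expand]
  simp only [hive4Gens]
  simp
  try omega

lemma coord5 (a : Fin 20 → ℕ) : ∑ k, a k * hive4Gens k 5 =
    a 0 + a 1 * 2 + a 2 * 2 + a 3 * 2 + a 4 + a 5 * 2 + a 6 * 2 + a 7 * 2 + a 8 * 2 + a 9 * 2 + a 10 * 2 + a 11 * 2 + a 12 * 2 + a 13 * 2 + a 14 * 3 + a 15 * 3 + a 16 * 4 + a 17 * 3 + a 18 * 4 + a 19 * 4 := by
  rw [sum_expand]
  simp only [hive4Gens]
  simp
  try omega

lemma coord6 (a : Fin 20 → ℕ) : ∑ k, a k * hive4Gens k 6 =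
    a 4 + a 5 + a 6 + a 7 + a 8 * 2 + a 9 * 2 + a 10 * 2 + a 11 * 3 + a 12 * 3 + a 13 * 3 + a 14 * 2 + a 15 * 2 + a 16 * 2 + a 17 * 3 + a 18 * 3 + a 19 * 4 := by
  rw [sum_expand]
  simp only [hive4Gens]
  simp
  try omega

lemma coord7 (a : Fin 20 → ℕ) : ∑ k, a k * hive4Gens k 7 =
    a 0 + a 1 + a 2 + a 3 + a 4 + a 5 * 2 + a 6 * 2 + a 7 * 2 + a 8 * 2 + a 9 * 3 + a 10 * 3 + a 11 * 3 + a 12 * 3 + a 13 * 3 + a 14 * 3 + a 15 * 3 + a 16 * 4 + a 17 * 4 + a 18 * 4 + a 19 * 5 := by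
  rw [sum_expand]
  simp only [hive4Gens]
  simp
  try omega

lemma coord8 (a : Fin 20 → ℕ) : ∑ k, a k * hive4Gens k 8 =
    a 0 + a 1 * 2 + a 2 * 2 + a 3 * 2 + a 4 + a 5 * 2 + a 6 * 3 + a 7 * 3 + a 8 * 2 + a 9 * 3 + a 10 * 3 + a 11 * 3 + a 12 * 3 + a 13 * 3 + a 14 * 4 + a 15 * 4 + a 16 * 5 + a 17 * 4 + a 18 * 5 + a 19 * 5 := by
  rw [sum_expand]
  simp only [hive4Gens]
  simp
  try omega

lemma coord9 (a : Fin 20 → ℕ) : ∑ k, a k * hive4Gens k 9 =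
    a 0 + a 1 * 2 + a 2 * 3 + a 3 * 3 + a 4 + a 5 * 2 + a 6 * 3 + a 7 * 3 + a 8 * 2 + a 9 * 3 + a 10 * 3 + a 11 * 3 + a 12 * 3 + a 13 * 3 + a 14 * 4 + a 15 * 4 + a 16 * 5 + a 17 * 4 + a 18 * 5 + a 19 * 5 := by
  rw [sum_expand]
  simp only [hive4Gens]
  simp
  try omega

lemma coord10 (a : Fin 20 → ℕ) : ∑ k, a k * hive4Gens k 10 =
    a 4 + a 5 + a 6 + a 7 + a 8 * 2 + a 9 * 2 + a 10 * 2 + a 11 * 3 + a 12 * 3 + a 13 * 4 + a 14 * 2 + a 15 * 2 + a 16 * 2 + a 17 * 3 + a 18 * 3 + a 19 * 4 := by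
  rw [sum_expand]
  simp only [hive4Gens]
  simp
  try omega

lemma coord11 (a : Fin 20 → ℕ) : ∑ k, a k * hive4Gens k 11 =
    a 0 + a 1 + a 2 + a 3 + a 4 + a 5 * 2 + a 6 * 2 + a 7 * 2 + a 8 * 2 + a 9 * 3 + a 10 * 3 + a 11 * 3 + a 12 * 4 + a 13 * 4 + a 14 * 3 + a 15 * 3 + a 16 * 4 + a 17 * 4 + a 18 * 4 + a 19 * 5 := by
  rw [sum_expand]
  simp only [hive4Gens]
  simp
  try omega

lemma coord12 (a : Fin 20 → ℕ) : ∑ k, a k * hive4Gens k 12 =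
    a 0 + a 1 * 2 + a 2 * 2 + a 3 * 2 + a 4 + a 5 * 2 + a 6 * 3 + a 7 * 3 + a 8 * 2 + a 9 * 3 + a 10 * 4 + a 11 * 3 + a 12 * 4 + a 13 * 4 + a 14 * 4 + a 15 * 4 + a 16 * 5 + a 17 * 5 + a 18 * 5 + a 19 * 6 := by
  rw [sum_expand]
  simp only [hive4Gens]
  simp
  try omega

lemma coord13 (a : Fin 20 → ℕ) : ∑ k, a k * hive4Gens k 13 =
    a 0 + a 1 * 2 + a 2 * 3 + a 3 * 3 + a 4 + a 5 * 2 + a 6 * 3 + a 7 * 4 + a 8 * 2 + a 9 * 3 + a 10 * 4 + a 11 * 3 + a 12 * 4 + a 13 * 4 + a 14 * 4 + a 15 * 5 + a 16 * 6 + a 17 * 5 + a 18 * 6 + a 19 * 6 := by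
  rw [sum_expand]
  simp only [hive4Gens]
  simp
  try omega

lemma coord14 (a : Fin 20 → ℕ) : ∑ k, a k * hive4Gens k 14 =
    a 0 + a 1 * 2 + a 2 * 3 + a 3 * 4 + a 4 + a 5 * 2 + a 6 * 3 + a 7 * 4 + a 8 * 2 + a 9 * 3 + a 10 * 4 + a 11 * 3 + a 12 * 4 + a 13 * 4 + a 14 * 4 + a 15 * 5 + a 16 * 6 + a 17 * 5 + a 18 * 6 + a 19 * 6 := by
  rw [sum_expand]
  simp only [hive4Gens]
  simp
  try omega

lemma std_unique {a b : Fin 20 →₀ ℕ} (ha : Std a) (hb : Std b) (h : img a = img b) : a = b := by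
  have hj : ∀ j, ∑ k, a k * hive4Gens k j = ∑ k, b k * hive4Gens k j := fun j =>
    DFunLike.congr_fun h j
  have e1 := hj 1
  rw [coord1, coord1] at e1
  have e2 := hj 2
  rw [coord2, coord2] at e2
  have e3 := hj 3
  rw [coord3, coord3] at e3
  have e4 := hj 4
  rw [coord4, coord4] at e4
  have e5 := hj 5
  rw [coord5, coord5] at e5
  have e6 := hj 6
  rw [coord6, coord6] at e6
  have e7 := hj 7
  rw [coord7, coord7] at e7
  have e8 := hj 8
  rw [coord8, coord8] at e8
  have e9 := hj 9
  rw [coord9, coord9] at e9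
  have e10 := hj 10
  rw [coord10, coord10] at e10
  have e11 := hj 11
  rw [coord11, coord11] at e11
  have e12 := hj 12
  rw [coord12, coord12] at e12
  have e13 := hj 13
  rw [coord13, coord13] at e13
  have e14 := hj 14
  rw [coord14, coord14] at e14
  obtain ⟨f2, f3, f4, f12, f13, f0, f1, f7, f8, f10, g1, g2, g3, g4⟩ :=
    reduce _ _ _ _ _ _ _ _ _ _ _ _ _ _ _ _ _ _ _ _ _ _ _ _ _ _ _ _ _ _ _ _ _ _ _ _ _ _ _ _
      e1 e2 e3 e4 e5 e6 e7 e8 e9 e10 e11 e12 e13 e14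
  obtain ⟨p0, p1, p2, p3, p4, p5, p6, p7, p8, p9, p10, p11, p12, p13, p14⟩ := ha
  obtain ⟨q0, q1, q2, q3, q4, q5, q6, q7, q8, q9, q10, q11, q12, q13, q14⟩ := hb
  have ca := cones _ _ _ _ _ _ _ _ _ _ p0 p1 p2 p3 p4 p5 p6 p7 p8 p9 p10 p11 p12 p13 p14
  have cb := cones _ _ _ _ _ _ _ _ _ _ q0 q1 q2 q3 q4 q5 q6 q7 q8 q9 q10 q11 q12 q13 q14
  obtain ⟨k5, k6, k9, k11, k14, k15, k16, k17, k18, k19⟩ := arith _ _ _ _ _ _ _ _ _ _ _ _ _ _ _ _ _ _ _ _ ca cb g1 g2 g3 g4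
  have k0 : a 0 = b 0 := by rw [k14, k15, k17] at f0; exact by simpa using f0
  have k1 : a 1 = b 1 := by rw [k16, k18] at f1; exact by simpa using f1
  have k7 : a 7 = b 7 := by rw [k15, k16, k18] at f7; exact by simpa using f7
  have k8 : a 8 = b 8 := by rw [k14, k15] at f8; exact by simpa using f8
  have k10 : a 10 = b 10 := by rw [k17, k19] at f10; exact by simpa using f10
  ext k
  fin_cases k
  · exact k0
  · exact k1
  · exact f2
  · exact f3
  · exact f4
  · exact k5
  · exact k6
  · exact k7
  · exact k8
  · exact k9
  · exact k10
  · exact k11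
  · exact f12
  · exact f13
  · exact k14
  · exact k15
  · exact k16
  · exact k17
  · exact k18
  · exact k19


lemma ker_le : RingHom.ker φ4 ≤ I4 := by
  choose nf hstd hnf using exists_std
  have himg : ∀ e, img (nf e) = img e := by
    intro e
    have h := I4_le (hnf e)
    rw [RingHom.mem_ker, map_sub, phi_monomial, phi_monomial, sub_eq_zero] at h
    exact ((monomial_left_injective (one_ne_zero : (1 : ℂ) ≠ 0)) h).symm
  let g : (Fin 15 →₀ ℕ) → (Fin 20 →₀ ℕ) := Function.extend img nf 0
  have hfac : Function.FactorsThrough nf img := by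
    intro e e' h
    exact std_unique (hstd e) (hstd e') (by rw [himg, himg, h])
  have hg : ∀ e, g (img e) = nf e := fun e => hfac.extend_apply 0 e
  let ψ : MvPolynomial (Fin 15) ℂ →ₗ[ℂ] MvPolynomial (Fin 20) ℂ :=
    (basisMonomials (Fin 15) ℂ).constr ℂ fun m => monomial (g m) 1
  have hψ : ∀ m, ψ (monomial m 1) = monomial (g m) 1 := by
    intro m
    have := (basisMonomials (Fin 15) ℂ).constr_basis ℂ
      (fun m => (monomial (g m) 1 : MvPolynomial (Fin 20) ℂ)) m
    simpa [ψ] using this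
  have key : ∀ f, f - ψ (φ4 f) ∈ I4 := by
    intro f
    induction f using MvPolynomial.induction_on' with
    | monomial e c =>
      have h := I4.mul_mem_left (C c) (hnf e)
      convert h using 1
      have : (monomial (img e) c : MvPolynomial (Fin 15) ℂ) = c • monomial (img e) 1 := by
        simp [smul_monomial]
      rw [phi_monomial, this, map_smul, hψ, hg, mul_sub, C_mul_monomial, C_mul_monomial,
        smul_monomial]
      simp
    | add p q hp hq =>
      have h := I4.add_mem hp hq
      convert h using 1
      simp only [map_add]
      ring
  intro f hf
  have h := key f
  rwa [RingHom.mem_ker.mp hf, map_zero, sub_zero] at h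

end Hive4

/-- The kernel of `φ` is the ideal generated by the fifteen binomials
`r₁, ..., r₁₅` (here `x_k` is `X (k-1)`). -/
theorem hive4_algebra_presentation :
    RingHom.ker φ4 =
      Ideal.span {(X 0 * X 6 * X 8 - X 5 * X 14 : MvPolynomial (Fin 20) ℂ),
        X 0 * X 7 * X 8 - X 5 * X 15,
        X 0 * X 10 * X 11 - X 9 * X 17,
        X 5 * X 10 * X 11 - X 9 * X 19,
        X 1 * X 7 * X 9 - X 6 * X 16,
        X 1 * X 7 * X 11 - X 6 * X 18,
        X 5 * X 17 - X 0 * X 19,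
        X 6 * X 15 - X 7 * X 14,
        X 9 * X 18 - X 11 * X 16,
        X 14 * X 16 - X 1 * X 9 * X 15,
        X 14 * X 18 - X 1 * X 11 * X 15,
        X 14 * X 19 - X 6 * X 8 * X 17,
        X 15 * X 19 - X 7 * X 8 * X 17,
        X 16 * X 19 - X 5 * X 10 * X 18,
        X 16 * X 17 - X 0 * X 10 * X 18} := by
  exact le_antisymm Hive4.ker_le Hive4.I4_le
end

section
/- The GL(3) tensor product algebra TA(3) = C[M_3 ⊕ M_3]^{U_3 × U_3 × U_3} is generated as a C-algebra by the ten polynomials: g_1 = y_{11}; g_2 = det of the 3×3 matrix (y_{ab})_{1≤a,b≤3}; g_3 = det [[y_{11}, y_{12}], [y_{21}, y_{22}]]; g_4 = x_{11}; g_5 = det [[x_{11}, y_{11}], [x_{21}, y_{21}]]; g_6 = det of the 3×3 matrix with columns (x_{a1}), (y_{a1}), (y_{a2}) for a = 1,2,3; g_7 = det [[x_{11}, x_{12}], [x_{21}, x_{22}]]; g_8 = det of the 3×3 matrix with columns (x_{a1}), (x_{a2}), (y_{a1}); g_9 = det of the 3×3 matrix (x_{ab})_{1≤a,b≤3}; g_10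 = D_2 · y_{11} − g_8 · y_{12}, where D_2 is the det of the 3×3 matrix with columns (x_{a1}), (x_{a2}), (y_{a2}). -/
open MvPolynomial

/-- The polynomial ring `ℂ[M_n ⊕ M_n]` in the variables `x_{ab}` (indexed by
`Sum.inl (a, b)`) and `y_{ab}` (indexed by `Sum.inr (a, b)`), `1 ≤ a, b ≤ n`. -/
abbrev MV (n : ℕ) := MvPolynomial ((Fin n × Fin n) ⊕ (Fin n × Fin n)) ℂ

/-- `g` is upper triangular with all diagonal entries equal to `1`. -/
def IsUniUpper {n : ℕ} (g : Matrix (Fin n) (Fin n) ℂ) : Prop :=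
  (∀ i, g i i = 1) ∧ ∀ i j : Fin n, j < i → g i j = 0

/-- The action of `(g₁, g₂, g₃) ∈ GL(n)³` on `ℂ[M_n ⊕ M_n]`, given by
`(g·f)(m₁, m₂) = f(g₁ᵀ m₁ g₂, g₁ᵀ m₂ g₃)`: it substitutes for `x_{ab}` the
`(a,b)` entry of `g₁ᵀ X g₂` and for `y_{ab}` the `(a,b)` entry of `g₁ᵀ Y g₃`. -/
noncomputable def act (n : ℕ) (g1 g2 g3 : Matrix (Fin n) (Fin n) ℂ) : MV n →ₐ[ℂ] MV n :=
  aeval (Sum.elim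
    (fun p : Fin n × Fin n => ∑ c : Fin n, ∑ d : Fin n,
      C (g1 c p.1) * C (g2 d p.2) * X (Sum.inl (c, d)))
    (fun p : Fin n × Fin n => ∑ c : Fin n, ∑ d : Fin n,
      C (g1 c p.1) * C (g3 d p.2) * X (Sum.inr (c, d))))

/-- The tensor product algebra `TA(n)`: the subalgebra of `ℂ[M_n ⊕ M_n]` of
polynomials invariant under `U_n × U_n × U_n`. -/
noncomputable def TA (n : ℕ) : Subalgebra ℂ (MV n) where
  carrier := {f | ∀ g1 g2 g3 : Matrix (Fin n) (Fin n) ℂ,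
      IsUniUpper g1 → IsUniUpper g2 → IsUniUpper g3 → act n g1 g2 g3 f = f}
  mul_mem' := by
    intro a b ha hb g1 g2 g3 u1 u2 u3
    rw [map_mul, ha g1 g2 g3 u1 u2 u3, hb g1 g2 g3 u1 u2 u3]
  one_mem' := by
    intro g1 g2 g3 u1 u2 u3
    rw [map_one]
  add_mem' := by
    intro a b ha hb g1 g2 g3 u1 u2 u3
    rw [map_add, ha g1 g2 g3 u1 u2 u3, hb g1 g2 g3 u1 u2 u3]
  zero_mem' := by
    intro g1 g2 g3 u1 u2 u3
    rw [map_zero]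
  algebraMap_mem' := by
    intro r g1 g2 g3 u1 u2 u3
    exact (act n g1 g2 g3).commutes r

/-- The coordinate `x_{ab}` on the first matrix summand (`a b` zero-based). -/
noncomputable def xv (a b : Fin 3) : MV 3 := X (Sum.inl (a, b))

/-- The coordinate `y_{ab}` on the second matrix summand (`a b` zero-based). -/
noncomputable def yv (a b : Fin 3) : MV 3 := X (Sum.inr (a, b))

/-- `g₁ = y₁₁`. -/
noncomputable def g1 : MV 3 := yv 0 0

/-- `g₂ = det (y_{ab})`. -/
noncomputable def g2 : MV 3 := (Matrix.of fun a b : Fin 3 => yv a b).det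

/-- `g₃ = det [[y₁₁, y₁₂], [y₂₁, y₂₂]]`. -/
noncomputable def g3 : MV 3 := yv 0 0 * yv 1 1 - yv 0 1 * yv 1 0

/-- `g₄ = x₁₁`. -/
noncomputable def g4 : MV 3 := xv 0 0

/-- `g₅ = det [[x₁₁, y₁₁], [x₂₁, y₂₁]]`. -/
noncomputable def g5 : MV 3 := xv 0 0 * yv 1 0 - yv 0 0 * xv 1 0

/-- `g₆ = det` of the `3×3` matrix with columns `x_{•1}`, `y_{•1}`, `y_{•2}`. -/
noncomputable def g6 : MV 3 :=
  (!![xv 0 0, yv 0 0, yv 0 1;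
      xv 1 0, yv 1 0, yv 1 1;
      xv 2 0, yv 2 0, yv 2 1]).det

/-- `g₇ = det [[x₁₁, x₁₂], [x₂₁, x₂₂]]`. -/
noncomputable def g7 : MV 3 := xv 0 0 * xv 1 1 - xv 0 1 * xv 1 0

/-- `g₈ = det` of the `3×3` matrix with columns `x_{•1}`, `x_{•2}`, `y_{•1}`. -/
noncomputable def g8 : MV 3 :=
  (!![xv 0 0, xv 0 1, yv 0 0;
      xv 1 0, xv 1 1, yv 1 0;
      xv 2 0, xv 2 1, yv 2 0]).det

/-- `g₉ = det (x_{ab})`. -/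
noncomputable def g9 : MV 3 := (Matrix.of fun a b : Fin 3 => xv a b).det

/-- `D₂ = det` of the `3×3` matrix with columns `x_{•1}`, `x_{•2}`, `y_{•2}`. -/
noncomputable def D2 : MV 3 :=
  (!![xv 0 0, xv 0 1, yv 0 1;
      xv 1 0, xv 1 1, yv 1 1;
      xv 2 0, xv 2 1, yv 2 1]).det

/-- `g₁₀ = D₂ ⬝ y₁₁ - g₈ ⬝ y₁₂`. -/
noncomputable def g10 : MV 3 := D2 * yv 0 0 - g8 * yv 0 1

/-! ### Divisibility by a variable through vanishing at points -/

/-- Setting the variable `i` to `0` changes a polynomial by a multiple of `X i`. -/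
lemma X_dvd_sub_subst {σ : Type*} [DecidableEq σ] (i : σ) (F : MvPolynomial σ ℂ) :
    (X i : MvPolynomial σ ℂ) ∣ F - aeval (Function.update X i 0) F := by
  induction F using MvPolynomial.induction_on with
  | C a => simp
  | add p q hp hq =>
    rw [map_add]
    convert dvd_add hp hq using 1
    ring
  | mul_X p n hp =>
    rw [map_mul, aeval_X]
    by_cases h : n = i
    · subst h; simp
    · rw [Function.update_of_ne h, ← sub_mul]
      exact Dvd.dvd.mul_right hp _

lemma eval_subst {σ : Type*} [DecidableEq σ] (i : σ) (F : MvPolynomial σ ℂ) (v : σ → ℂ) :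
    eval v (aeval (Function.update X i 0) F) = eval (Function.update v i 0) F := by
  induction F using MvPolynomial.induction_on with
  | C a => simp
  | add p q hp hq => rw [map_add, map_add, map_add, hp, hq]
  | mul_X p n hp =>
    simp only [map_mul, hp, aeval_X, eval_X]
    by_cases h : n = i
    · subst h; simp
    · simp [Function.update_of_ne h]

/-- A polynomial vanishing at the points of the hyperplane `v i = 0` with all other coordinates
nonzero is divisible by `X i`. -/
lemma X_dvd_of_vanish {σ : Type*} [DecidableEq σ] [Fintype σ] (i : σ) (G : MvPolynomial σ ℂ)
    (hG : ∀ v : σ → ℂ, v i = 0 → (∀ j, j ≠ i → v j ≠ 0) → eval v G = 0) :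
    (X i : MvPolynomial σ ℂ) ∣ G := by
  have h0 : (∏ j, (X j : MvPolynomial σ ℂ)) * aeval (Function.update X i 0) G = 0 := by
    apply MvPolynomial.funext
    intro v
    rw [map_mul, eval_subst, map_prod, map_zero]
    simp only [eval_X]
    by_cases hv : ∀ j, v j ≠ 0
    · rw [hG _ (by simp) (fun j hj => by simp [Function.update_of_ne hj, hv j]), mul_zero]
    · push Not at hv
      obtain ⟨j, hj⟩ := hv
      rw [Finset.prod_eq_zero (Finset.mem_univ j) hj, zero_mul]
  have h1 : aeval (Function.update X i 0) G = (0 : MvPolynomial σ ℂ) := by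
    rcases mul_eq_zero.1 h0 with h | h
    · rw [Finset.prod_eq_zero_iff] at h
      obtain ⟨j, -, hj⟩ := h
      exact absurd hj (X_ne_zero j)
    · exact h
  have := X_dvd_sub_subst i G
  rwa [h1, sub_zero] at this

/-! ### The hypersurface `q = 0` -/

/-- Polynomial ring in ten variables. -/
abbrev B10 := MvPolynomial (Fin 10) ℂ

/-- Right side of the relation, in nine variables. -/
noncomputable def r0 : MvPolynomial (Fin 9) ℂ := X 0 * X 5 * X 6 + X 2 * X 3 * X 7

/-- The relation among the ten generators. -/
noncomputable def qrel : B10 := X 4 * X 9 - (X 0 * X 5 * X 6 + X 2 * X 3 * X 7)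

lemma rename_r0 : rename Fin.castSucc r0 = X 4 * X 9 - qrel := by
  simp only [r0, qrel, map_add, map_mul, rename_X]
  have e0 : (Fin.castSucc (0 : Fin 9)) = 0 := rfl
  have e2 : (Fin.castSucc (2 : Fin 9)) = 2 := rfl
  have e3 : (Fin.castSucc (3 : Fin 9)) = 3 := rfl
  have e5 : (Fin.castSucc (5 : Fin 9)) = 5 := rfl
  have e6 : (Fin.castSucc (6 : Fin 9)) = 6 := rfl
  have e7 : (Fin.castSucc (7 : Fin 9)) = 7 := rfl
  rw [e0, e2, e3, e5, e6, e7]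
  ring

lemma pseudo_div (F : B10) : ∃ (N : ℕ) (G : MvPolynomial (Fin 9) ℂ) (b : B10),
    (X 4) ^ N * F = rename Fin.castSucc G + qrel * b := by
  have e4 : (X 4 : B10) = rename Fin.castSucc (X 4 : MvPolynomial (Fin 9) ℂ) := by
    rw [rename_X]; rfl
  induction F using MvPolynomial.induction_on with
  | C a => exact ⟨0, C a, 0, by simp⟩
  | add p q hp hq =>
    obtain ⟨N, G, b, h⟩ := hp
    obtain ⟨N', G', b', h'⟩ := hq
    refine ⟨N + N', X 4 ^ N' * G + X 4 ^ N * G', X 4 ^ N' * b + X 4 ^ N * b', ?_⟩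
    simp only [map_add, map_mul, map_pow, ← e4]
    linear_combination (X 4 : B10) ^ N' * h + (X 4 : B10) ^ N * h'
  | mul_X p n hp =>
    obtain ⟨N, G, b, h⟩ := hp
    induction n using Fin.lastCases with
    | last =>
      refine ⟨N + 1, r0 * G, rename Fin.castSucc G + X 4 * X 9 * b, ?_⟩
      have e9 : (Fin.last 9) = 9 := rfl
      rw [map_mul, rename_r0, e9]
      linear_combination (X 4 : B10) * X 9 * h
    | cast j =>
      refine ⟨N, G * X j, b * X j.castSucc, ?_⟩
      rw [map_mul, rename_X]
      linear_combination (X j.castSucc : B10) * h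

/-- The indices of `g₁, g₃, g₄, g₇`. -/
def Bad (i : Fin 10) : Prop := i = 0 ∨ i = 2 ∨ i = 3 ∨ i = 6

lemma cancel_one {i : Fin 10} (hi : Bad i) {F a b : B10} (h : X 4 * F = X i * a + qrel * b) :
    ∃ a' b' : B10, F = X i * a' + qrel * b' := by
  have hi4 : (4 : Fin 10) ≠ i := by rcases hi with rfl | rfl | rfl | rfl <;> decide
  obtain ⟨b1, hb1⟩ := X_dvd_sub_subst i b
  have h2 : (X 4 : B10) ∣ aeval (Function.update X i 0) b := by
    apply X_dvd_of_vanish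
    intro v hv hne
    rw [eval_subst]
    have h3 := congrArg (eval (Function.update v i 0)) h
    have h4 : eval (Function.update v i 0) (qrel * b) = 0 := by
      simp only [map_add, map_mul, eval_X, Function.update_of_ne hi4, hv, Function.update_self,
        zero_mul, zero_add] at h3 ⊢
      exact h3.symm
    rw [map_mul] at h4
    refine (mul_eq_zero.1 h4).resolve_left ?_
    have n0 := hne 0 (by decide)
    have n2 := hne 2 (by decide)
    have n3 := hne 3 (by decide)
    have n5 := hne 5 (by decide)
    have n6 := hne 6 (by decide)
    have n7 := hne 7 (by decide)
    rcases hi with rfl | rfl | rfl | rfl <;>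
      simp [qrel, Function.update, hv, n0, n2, n3, n5, n6, n7]
  obtain ⟨b2, hb2⟩ := h2
  have h5 : (X 4 : B10) * (F - qrel * b2) = X i * (a + qrel * b1) := by
    linear_combination h + qrel * hb1 + qrel * hb2
  have h6 : (X i : B10) ∣ F - qrel * b2 := by
    have := (X_prime (R := ℂ) (i := i)).dvd_or_dvd ⟨_, h5⟩
    refine this.resolve_left ?_
    rw [X_dvd_X]
    simpa using hi4.symm
  obtain ⟨a', ha'⟩ := h6
  exact ⟨a', b2, by linear_combination ha'⟩

lemma cancel_pow {i : Fin 10} (hi : Bad i) (N : ℕ) : ∀ {F a b : B10},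
    X 4 ^ N * F = X i * a + qrel * b → ∃ a' b' : B10, F = X i * a' + qrel * b' := by
  induction N with
  | zero => intro F a b h; exact ⟨a, b, by simpa using h⟩
  | succ N ih =>
    intro F a b h
    obtain ⟨a', b', h'⟩ := ih (F := X 4 * F) (a := a) (b := b) (by rw [← h]; ring)
    exact cancel_one hi h'

lemma mem_ideal_of_vanish {i : Fin 10} (hi : Bad i) (F : B10)
    (hF : ∀ v : Fin 10 → ℂ, v i = 0 → eval v qrel = 0 →
      (∀ j, j ≠ i → j ≠ 9 → v j ≠ 0) → eval v F = 0) :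
    ∃ a b : B10, F = X i * a + qrel * b := by
  obtain ⟨N, G, b, h⟩ := pseudo_div F
  obtain ⟨i', rfl⟩ : ∃ i' : Fin 9, i = i'.castSucc := by
    rcases hi with rfl | rfl | rfl | rfl
    exacts [⟨0, rfl⟩, ⟨2, rfl⟩, ⟨3, rfl⟩, ⟨6, rfl⟩]
  have hi4 : (4 : Fin 9) ≠ i' := by
    rintro rfl
    rcases hi with h | h | h | h <;> exact absurd h (by decide)
  have hG : (X i' : MvPolynomial (Fin 9) ℂ) ∣ G := by
    apply X_dvd_of_vanish
    intro v hv hne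
    have n4 := hne 4 hi4
    let w : Fin 10 → ℂ := Fin.snoc v (eval v r0 / v 4)
    have hw : ∀ j : Fin 9, w j.castSucc = v j := fun j => by simp [w]
    have hw' : w ∘ Fin.castSucc = v := _root_.funext hw
    have hw4 : w 4 = v 4 := hw 4
    have hw9 : w 9 = eval v r0 / v 4 := by
      exact Fin.snoc_last (α := fun _ => ℂ) (eval v r0 / v 4) v
    have hq : eval w qrel = 0 := by
      have h1 := congrArg (eval w) rename_r0
      rw [eval_rename, hw', map_sub, map_mul, eval_X, eval_X, hw4, hw9,
        mul_div_cancel₀ _ n4] at h1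
      linear_combination h1
    have h2 := congrArg (eval w) h
    rw [map_mul, map_add, map_mul, hq, eval_rename, hw', hF w (by rw [hw, hv]) hq ?_] at h2
    · simpa using h2.symm
    · intro j hj hj9
      induction j using Fin.lastCases with
      | last => exact absurd rfl hj9
      | cast j =>
        rw [hw]
        exact hne j (fun e => hj (by rw [e]))
  obtain ⟨G1, rfl⟩ := hG
  rw [map_mul, rename_X] at h
  exact cancel_pow hi N h

/-! ### Points and the values of the generators -/

/-- The ten generators as a family. -/
noncomputable def gv : Fin 10 → MV 3 := ![g1, g2, g3, g4, g5, g6, g7, g8, g9, g10]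

/-- The point of `M_3 ⊕ M_3` given by two matrices. -/
def pt (A B : Matrix (Fin 3) (Fin 3) ℂ) : (Fin 3 × Fin 3) ⊕ (Fin 3 × Fin 3) → ℂ :=
  Sum.elim (fun p => A p.1 p.2) (fun p => B p.1 p.2)

/-- The values of the ten generators at a point. -/
def gval (A B : Matrix (Fin 3) (Fin 3) ℂ) : Fin 10 → ℂ :=
  ![B 0 0, B.det, B 0 0 * B 1 1 - B 0 1 * B 1 0, A 0 0, A 0 0 * B 1 0 - B 0 0 * A 1 0,
    (!![A 0 0, B 0 0, B 0 1; A 1 0, B 1 0, B 1 1; A 2 0, B 2 0, B 2 1]).det,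
    A 0 0 * A 1 1 - A 0 1 * A 1 0,
    (!![A 0 0, A 0 1, B 0 0; A 1 0, A 1 1, B 1 0; A 2 0, A 2 1, B 2 0]).det,
    A.det,
    (!![A 0 0, A 0 1, B 0 1; A 1 0, A 1 1, B 1 1; A 2 0, A 2 1, B 2 1]).det * B 0 0
    - (!![A 0 0, A 0 1, B 0 0; A 1 0, A 1 1, B 1 0; A 2 0, A 2 1, B 2 0]).det * B 0 1]

lemma eval_gv (A B : Matrix (Fin 3) (Fin 3) ℂ) (j : Fin 10) :
    eval (pt A B) (gv j) = gval A B j := by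
  fin_cases j <;>
  simp [gv, gval, g1, g2, g3, g4, g5, g6, g7, g8, g9, g10, D2, xv, yv, pt, Matrix.det_fin_three]

lemma eval_aeval_gv (A B : Matrix (Fin 3) (Fin 3) ℂ) (F : B10) :
    eval (pt A B) (aeval gv F) = eval (gval A B) F := by
  induction F using MvPolynomial.induction_on with
  | C a => simp
  | add p q hp hq => rw [map_add, map_add, map_add, hp, hq]
  | mul_X p n hp => rw [map_mul, map_mul, map_mul, hp, aeval_X, eval_gv, eval_X]

lemma exists_pt (p : (Fin 3 × Fin 3) ⊕ (Fin 3 × Fin 3) → ℂ) :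
    ∃ A B, p = pt A B := by
  refine ⟨fun i j => p (Sum.inl (i, j)), fun i j => p (Sum.inr (i, j)), ?_⟩
  funext x
  rcases x with ⟨i, j⟩ | ⟨i, j⟩ <;> rfl

lemma qrel_gv : aeval gv qrel = 0 := by
  apply MvPolynomial.funext
  intro p
  obtain ⟨A, B, rfl⟩ := exists_pt p
  rw [eval_aeval_gv]
  simp [qrel, gval, Matrix.det_fin_three]
  ring

lemma v9_eq {v : Fin 10 → ℂ} (h : eval v qrel = 0) (h4 : v 4 ≠ 0) :
    v 9 = (v 0 * v 5 * v 6 + v 2 * v 3 * v 7) / v 4 := by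
  simp [qrel] at h
  field_simp
  linear_combination h

lemma exists_point {i : Fin 10} (hi : Bad i) (v : Fin 10 → ℂ) (hv : v i = 0)
    (hq : eval v qrel = 0) (hne : ∀ j, j ≠ i → j ≠ 9 → v j ≠ 0) :
    ∃ A B, gval A B = v := by
  rcases hi with rfl | rfl | rfl | rfl
  · have n1 := hne 1 (by decide) (by decide)
    have n2 := hne 2 (by decide) (by decide)
    have n3 := hne 3 (by decide) (by decide)
    have n4 := hne 4 (by decide) (by decide)
    have n6 := hne 6 (by decide) (by decide)
    have h9 := v9_eq hq n4
    refine ⟨!![v 3, 0, 0; 0, v 6 / v 3, 0; 0, 0, v 8 / v 6],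
      !![0, - v 2 * v 3 / v 4, 0; v 4 / v 3, 0, 0; v 7 / v 6, v 5 / v 4, v 1 / v 2], ?_⟩
    funext j
    fin_cases j <;> simp [gval, Matrix.det_fin_three, hv, h9] <;> field_simp
  · have n0 := hne 0 (by decide) (by decide)
    have n1 := hne 1 (by decide) (by decide)
    have n3 := hne 3 (by decide) (by decide)
    have n4 := hne 4 (by decide) (by decide)
    have n5 := hne 5 (by decide) (by decide)
    have n6 := hne 6 (by decide) (by decide)
    have h9 := v9_eq hq n4
    refine ⟨!![v 3, 0, 0; 0, v 6 / v 3, 0; 0, 0, v 8 / v 6],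
      !![v 0, 0, 0; v 4 / v 3, 0, - v 1 * v 4 / (v 5 * v 0); v 7 / v 6, v 5 / v 4, 0], ?_⟩
    funext j
    fin_cases j <;> simp [gval, Matrix.det_fin_three, hv, h9] <;> field_simp
  · have n0 := hne 0 (by decide) (by decide)
    have n2 := hne 2 (by decide) (by decide)
    have n4 := hne 4 (by decide) (by decide)
    have n6 := hne 6 (by decide) (by decide)
    have h9 := v9_eq hq n4
    refine ⟨!![0, v 6 * v 0 / v 4, 0; - v 4 / v 0, 0, 0; v 5 / v 2, - v 7 / v 4, v 8 / v 6],
      !![v 0, 0, 0; 0, v 2 / v 0, 0; 0, 0, v 1 / v 2], ?_⟩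
    funext j
    fin_cases j <;> simp [gval, Matrix.det_fin_three, hv, h9] <;> field_simp
  · have n0 := hne 0 (by decide) (by decide)
    have n2 := hne 2 (by decide) (by decide)
    have n3 := hne 3 (by decide) (by decide)
    have n4 := hne 4 (by decide) (by decide)
    have n7 := hne 7 (by decide) (by decide)
    have h9 := v9_eq hq n4
    refine ⟨!![v 3, 0, 0; - v 4 / v 0, 0, v 8 * v 4 / (v 7 * v 3); v 5 / v 2, - v 7 / v 4, 0],
      !![v 0, 0, 0; 0, v 2 / v 0, 0; 0, 0, v 1 / v 2], ?_⟩
    funext j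
    fin_cases j <;> simp [gval, Matrix.det_fin_three, hv, h9] <;> field_simp

lemma gv_ne_zero {i : Fin 10} (hi : Bad i) : gv i ≠ 0 := by
  intro h
  have := congrArg (eval (pt 1 1)) h
  rw [eval_gv] at this
  rcases hi with rfl | rfl | rfl | rfl <;> simp [gval] at this

/-- The algebra generated by the `gv j` is saturated with respect to `g₁, g₃, g₄, g₇`. -/
lemma saturated {i : Fin 10} (hi : Bad i) {f : MV 3}
    (h : gv i * f ∈ (aeval gv : B10 →ₐ[ℂ] MV 3).range) :
    f ∈ (aeval gv : B10 →ₐ[ℂ] MV 3).range := by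
  obtain ⟨F, hF⟩ := h
  change aeval gv F = gv i * f at hF
  obtain ⟨a, b, hab⟩ := mem_ideal_of_vanish hi F (by
    intro v hv hq hne
    obtain ⟨A, B, rfl⟩ := exists_point hi v hv hq hne
    rw [← eval_aeval_gv, hF, map_mul, eval_gv, hv, zero_mul])
  refine ⟨a, ?_⟩
  change aeval gv a = f
  apply mul_left_cancel₀ (gv_ne_zero hi)
  rw [← hF, hab]
  rw [map_add, map_mul, map_mul, qrel_gv, aeval_X, zero_mul, add_zero]

lemma saturated_pow {i : Fin 10} (hi : Bad i) (N : ℕ) : ∀ {f : MV 3},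
    gv i ^ N * f ∈ (aeval gv : B10 →ₐ[ℂ] MV 3).range →
    f ∈ (aeval gv : B10 →ₐ[ℂ] MV 3).range := by
  induction N with
  | zero => intro f h; simpa using h
  | succ N ih =>
    intro f h
    apply saturated hi
    apply ih
    rwa [← mul_assoc, ← pow_succ]

/-! ### The section -/

/-- Denominator of the section. -/
noncomputable def hpol : B10 := X 0 * X 2 * X 3 * X 6

/-- First matrix of the section. -/
noncomputable def secA (v : Fin 10 → ℂ) : Matrix (Fin 3) (Fin 3) ℂ :=
  !![v 3, 0, 0; 0, v 6 / v 3, 0; 0, 0, v 8 / v 6]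

/-- Second matrix of the section. -/
noncomputable def secB (v : Fin 10 → ℂ) : Matrix (Fin 3) (Fin 3) ℂ :=
  !![v 0, 0, 0; v 4 / v 3, v 2 / v 0, 0; v 7 / v 6, v 9 / (v 6 * v 0), v 1 / v 2]

lemma sec_num (s : (Fin 3 × Fin 3) ⊕ (Fin 3 × Fin 3)) : ∃ S : B10, ∀ v : Fin 10 → ℂ,
    eval v hpol ≠ 0 → eval v hpol * pt (secA v) (secB v) s = eval v S := by
  have key : ∀ T : B10, ∀ t : (Fin 10 → ℂ) → ℂ, (∀ v : Fin 10 → ℂ, v 0 ≠ 0 → v 2 ≠ 0 → v 3 ≠ 0 →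
      v 6 ≠ 0 → v 0 * v 2 * v 3 * v 6 * t v = eval v T) → ∃ S : B10, ∀ v : Fin 10 → ℂ,
      eval v hpol ≠ 0 → eval v hpol * t v = eval v S := by
    intro T t h
    refine ⟨T, fun v hv => ?_⟩
    simp [hpol] at hv ⊢
    exact h v hv.1.1.1 hv.1.1.2 hv.1.2 hv.2
  rcases s with ⟨i, j⟩ | ⟨i, j⟩
  · by_cases hij : i = j
    · subst hij
      apply key (![hpol * X 3, X 0 * X 2 * X 6 * X 6, X 0 * X 2 * X 3 * X 8] i)
      intro v n0 n2 n3 n6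
      fin_cases i <;> simp [pt, secA, hpol] <;> field_simp
    · apply key 0
      intro v n0 n2 n3 n6
      fin_cases i <;> fin_cases j <;> simp [pt, secA] at hij ⊢
  · apply key (!![hpol * X 0, 0, 0; X 0 * X 2 * X 6 * X 4, X 2 * X 3 * X 6 * X 2, 0;
      X 0 * X 2 * X 3 * X 7, X 2 * X 3 * X 9, X 0 * X 3 * X 6 * X 1] i j)
    intro v n0 n2 n3 n6
    fin_cases i <;> fin_cases j <;> simp [pt, secB, hpol] <;> field_simp

lemma sec_pow (f : MV 3) : ∃ (N : ℕ) (P : B10), ∀ v : Fin 10 → ℂ, eval v hpol ≠ 0 →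
    eval v hpol ^ N * eval (pt (secA v) (secB v)) f = eval v P := by
  induction f using MvPolynomial.induction_on with
  | C a => exact ⟨0, C a, by simp⟩
  | add p q hp hq =>
    obtain ⟨N, P, h⟩ := hp
    obtain ⟨N', P', h'⟩ := hq
    refine ⟨N + N', hpol ^ N' * P + hpol ^ N * P', fun v hv => ?_⟩
    simp only [map_add, map_mul, map_pow, ← h v hv, ← h' v hv]
    ring
  | mul_X p n hp =>
    obtain ⟨N, P, h⟩ := hp
    obtain ⟨S, hS⟩ := sec_num n
    refine ⟨N + 1, P * S, fun v hv => ?_⟩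
    simp only [map_mul, ← h v hv, ← hS v hv, eval_X]
    ring

lemma eval_act (a b c A B : Matrix (Fin 3) (Fin 3) ℂ) (f : MV 3) :
    eval (pt A B) (act 3 a b c f) = eval (pt (a.transpose * A * b) (a.transpose * B * c)) f := by
  induction f using MvPolynomial.induction_on with
  | C a => simp [act]
  | add p q hp hq => rw [map_add, map_add, map_add, hp, hq]
  | mul_X p n hp =>
    rw [map_mul, map_mul, hp, map_mul]
    congr 1
    rcases n with ⟨i, j⟩ | ⟨i, j⟩ <;>
    · simp [act, pt, Matrix.mul_apply, Fin.sum_univ_three]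
      ring

lemma section_eq {f : MV 3} (hf : f ∈ TA 3) (A B : Matrix (Fin 3) (Fin 3) ℂ)
    (n0 : gval A B 0 ≠ 0) (n2 : gval A B 2 ≠ 0) (n3 : gval A B 3 ≠ 0) (n6 : gval A B 6 ≠ 0) :
    eval (pt A B) f = eval (pt (secA (gval A B)) (secB (gval A B))) f := by
  have h := hf
    (!![1, A 1 0 / A 0 0, A 2 0 / A 0 0;
        0, 1, (A 0 0 * A 2 1 - A 2 0 * A 0 1) / gval A B 6; 0, 0, 1])
    (!![1, A 0 1 / A 0 0, A 0 2 / A 0 0;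
        0, 1, (A 0 0 * A 1 2 - A 1 0 * A 0 2) / gval A B 6; 0, 0, 1])
    (!![1, B 0 1 / B 0 0, B 0 2 / B 0 0;
        0, 1, (B 0 0 * B 1 2 - B 1 0 * B 0 2) / gval A B 2; 0, 0, 1])
    (by constructor
        · intro i; fin_cases i <;> simp
        · intro i j hij; fin_cases i <;> fin_cases j <;> simp at hij ⊢)
    (by constructor
        · intro i; fin_cases i <;> simp
        · intro i j hij; fin_cases i <;> fin_cases j <;> simp at hij ⊢)
    (by constructor
        · intro i; fin_cases i <;> simp
        · intro i j hij; fin_cases i <;> fin_cases j <;> simp at hij ⊢)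
  have h' := congrArg (eval (pt (secA (gval A B)) (secB (gval A B)))) h
  rw [eval_act] at h'
  rw [← h']
  have m0 : B 0 0 ≠ 0 := n0
  have m3 : A 0 0 ≠ 0 := n3
  have m2 : B 0 0 * B 1 1 - B 0 1 * B 1 0 ≠ 0 := n2
  have m6 : A 0 0 * A 1 1 - A 0 1 * A 1 0 ≠ 0 := n6
  have m2' : B 0 0 * B 1 1 - B 1 0 * B 0 1 ≠ 0 := by rwa [mul_comm (B 1 0)]
  have m6' : A 0 0 * A 1 1 - A 1 0 * A 0 1 ≠ 0 := by rwa [mul_comm (A 1 0)]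
  congr 2
  congr 1
  · ext i j
    fin_cases i <;> fin_cases j <;>
    simp [Matrix.mul_apply, Fin.sum_univ_three, secA, gval, Matrix.det_fin_three] <;>
    field_simp <;> ring
  · ext i j
    fin_cases i <;> fin_cases j <;>
    simp [Matrix.mul_apply, Fin.sum_univ_three, secB, gval, Matrix.det_fin_three] <;>
    field_simp <;> ring

lemma TA_le {f : MV 3} (hf : f ∈ TA 3) : f ∈ (aeval gv : B10 →ₐ[ℂ] MV 3).range := by
  obtain ⟨N, P, hP⟩ := sec_pow f
  have h1 : aeval gv hpol * (aeval gv hpol ^ N * f) = aeval gv hpol * aeval gv P := by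
    apply MvPolynomial.funext
    intro p
    obtain ⟨A, B, rfl⟩ := exists_pt p
    simp only [map_mul, map_pow, eval_aeval_gv]
    by_cases h0 : eval (gval A B) hpol = 0
    · rw [h0, zero_mul, zero_mul]
    · rw [← hP _ h0]
      have h0' := h0
      simp only [hpol, map_mul, eval_X, mul_ne_zero_iff] at h0'
      rw [section_eq hf A B h0'.1.1.1 h0'.1.1.2 h0'.1.2 h0'.2]
  have e : aeval gv hpol = gv 0 * gv 2 * gv 3 * gv 6 := by simp [hpol]
  have hn : aeval gv hpol ≠ 0 := by
    rw [e]
    exact mul_ne_zero (mul_ne_zero (mul_ne_zero (gv_ne_zero (by simp [Bad]))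
      (gv_ne_zero (by simp [Bad]))) (gv_ne_zero (by simp [Bad]))) (gv_ne_zero (by simp [Bad]))
  have h2 := mul_left_cancel₀ hn h1
  apply saturated_pow (i := 6) (by simp [Bad]) N
  apply saturated_pow (i := 3) (by simp [Bad]) N
  apply saturated_pow (i := 2) (by simp [Bad]) N
  apply saturated_pow (i := 0) (by simp [Bad]) N
  refine ⟨P, ?_⟩
  change aeval gv P = _
  rw [← h2, e]
  ring

lemma gval_act {a b c : Matrix (Fin 3) (Fin 3) ℂ} (ha : IsUniUpper a) (hb : IsUniUpper b)
    (hc : IsUniUpper c) (A B : Matrix (Fin 3) (Fin 3) ℂ) (j : Fin 10) :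
    gval (a.transpose * A * b) (a.transpose * B * c) j = gval A B j := by
  have a10 := ha.2 1 0 (by decide)
  have a20 := ha.2 2 0 (by decide)
  have a21 := ha.2 2 1 (by decide)
  have b10 := hb.2 1 0 (by decide)
  have b20 := hb.2 2 0 (by decide)
  have b21 := hb.2 2 1 (by decide)
  have c10 := hc.2 1 0 (by decide)
  have c20 := hc.2 2 0 (by decide)
  have c21 := hc.2 2 1 (by decide)
  fin_cases j <;>
  simp [gval, Matrix.det_fin_three, Matrix.mul_apply, Fin.sum_univ_three, ha.1, hb.1, hc.1,
    a10, a20, a21, b10, b20, b21, c10, c20, c21] <;> ring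

lemma gv_mem (j : Fin 10) : gv j ∈ TA 3 := by
  intro a b c ha hb hc
  apply MvPolynomial.funext
  intro p
  obtain ⟨A, B, rfl⟩ := exists_pt p
  rw [eval_act, eval_gv, eval_gv, gval_act ha hb hc]

/-- The `GL(3)` tensor product algebra `TA(3)` is generated as a `ℂ`-algebra by the
ten polynomials `g₁, ..., g₁₀`. -/
theorem TA3_generators :
    Algebra.adjoin ℂ ({g1, g2, g3, g4, g5, g6, g7, g8, g9, g10} : Set (MV 3)) = TA 3 := by
  have hs : ({g1, g2, g3, g4, g5, g6, g7, g8, g9, g10} : Set (MV 3)) = Set.range gv := by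
    simp only [gv, Matrix.range_cons, Matrix.range_empty, Set.union_empty, Set.singleton_union]
  rw [hs]
  apply le_antisymm
  · rw [Algebra.adjoin_le_iff]
    rintro _ ⟨j, rfl⟩
    exact gv_mem j
  · intro f hf
    rw [Algebra.adjoin_range_eq_range_aeval]
    exact TA_le hf
end
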